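/- Let q be a prime power with gcd(q,30) = 1, and let S(𝔽_q) be the set of points p ∈ 𝔽_q⁴ at which f_5 and all four of its partial derivatives vanish (the 𝔽_q-rational singular points of the Chebyshev threefold). Then |S(𝔽_q)| = 120 if q ≡ 1 (mod 15), |S(𝔽_q)| = 104 if q ≡ 11 (mod 15), |S(𝔽_q)| = 24 if q ≡ 4 (mod 15), |S(𝔽_q)| = 8 if q ≡ 14 (mod 15), and |S(𝔽_q)| = 0 otherwise. -/

import Mathlib

/-!
Write `x = x₁`, `y = x₂`, `s = x + y`, `p = x y`. A point of the threefold is singular exactly when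
`(x₁, x₂)` and `(x₄, x₅)` are critical points of `P₅` with the same critical value, so the number
of singular points is the sum over critical values of the squared number of critical points.

Up to the factor `5`, the difference of the partial derivatives of `P₅` is
`(x - y) (s + 2) (s² - s + 1 - 2 p)`. Each factor leaves a one-variable problem, and the critical
points come out (`isCrit_iff`) as follows, where `r² = r + 1`, `ζ` is a primitive fifth root of
unity and `ω` a primitive cube root of unity:

* `(r, r)`, with value `6`;
* `(r + 1, r + 1)`, `(-1 + ζ - ζ⁻¹, -1 - ζ + ζ⁻¹)` and `(-ζ, -ζ⁻¹)`, with value `-2`;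
* `(ω r, ω² r)`, with value `-3`.

The values are distinct away from characteristics `2` and `3`, so the count is
`g² + (g + 2 z)² + (g w)²`, where `g`, `z`, `w` are the numbers of elements `r`, `ζ`, `ω` of `𝔽_q`.
Here `g = 2` when `5` is a square, i.e. `q ≡ ±1 mod 5` by quadratic reciprocity, `z = 4` when
`5 ∣ q - 1`, `w = 2` when `3 ∣ q - 1`, and they vanish otherwise.
-/

open MvPolynomial

/-- The degree-5 generalized Chebyshev polynomial `P_5` evaluated at two elements
of a commutative ring. -/
def P5 {R : Type*} [CommRing R] (x1 x2 : R) : R :=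
  x1 ^ 5 + x2 ^ 5 - 5 * x1 * x2 * (x1 ^ 2 + x2 ^ 2) + 5 * x1 * x2 * (x1 + x2)
    + 5 * (x1 ^ 2 + x2 ^ 2) - 5 * (x1 + x2)

/-- `f_5 = P_5(x_1,x_2) - P_5(x_4,x_5)` as a polynomial in four variables over a
field `F`. -/
noncomputable def f5 (F : Type*) [Field F] : MvPolynomial (Fin 4) F :=
  P5 (X 0) (X 1) - P5 (X 2) (X 3)

namespace ChebyshevThreefold

/-! ### The families of critical points -/

/-- The partial derivative of `P5` in its first variable, divided by `5`. By symmetry of `P5`, the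
other one is `dP y x`. -/
def dP {F : Type*} [Field F] (x y : F) : F :=
  x ^ 4 - 3 * x ^ 2 * y - y ^ 3 + 2 * x * y + y ^ 2 + 2 * x - 1

/-- Critical points of `P5`, in characteristic different from `5`. -/
def IsCrit {F : Type*} [Field F] (a : F × F) : Prop := dP a.1 a.2 = 0 ∧ dP a.2 a.1 = 0

/-- The golden ratios of `F`. -/
def golden (F : Type*) [Field F] : Set F := {r | r ^ 2 = r + 1}

/-- The primitive fifth roots of unity of `F` (in characteristic different from `5`). -/
def zeta5 (F : Type*) [Field F] : Set F := {z | z ^ 4 + z ^ 3 + z ^ 2 + z + 1 = 0}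

/-- The primitive cube roots of unity of `F` (in characteristic different from `3`). -/
def omega3 (F : Type*) [Field F] : Set F := {w | w ^ 2 + w + 1 = 0}

/-- The critical points with value `6`. -/
def critA (F : Type*) [Field F] : Set (F × F) := (fun r => (r, r)) '' golden F

/-- The diagonal critical points with value `-2`. -/
def critB (F : Type*) [Field F] : Set (F × F) := (fun r => (r + 1, r + 1)) '' golden F

/-- The critical points on the line `x + y = -2`; note `ζ ^ 4 = ζ⁻¹`. -/
def critC (F : Type*) [Field F] : Set (F × F) :=
  (fun z => (-1 + z - z ^ 4, -1 - z + z ^ 4)) '' zeta5 F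

/-- The critical points with `x * y = 1` off the diagonal; note `ζ ^ 4 = ζ⁻¹`. -/
def critD (F : Type*) [Field F] : Set (F × F) := (fun z => (-z, -z ^ 4)) '' zeta5 F

/-- The critical points with value `-3`. -/
def critE (F : Type*) [Field F] : Set (F × F) :=
  (fun a : F × F => (a.2 * a.1, a.2 ^ 2 * a.1)) '' (golden F ×ˢ omega3 F)

section
variable {F : Type*} [Field F]

/-! ### Determination of the critical points and their values -/

theorem singular_iff (h5 : (5 : F) ≠ 0) (p : Fin 4 → F) :
    (eval p (f5 F) = 0 ∧ ∀ i : Fin 4, eval p (pderiv i (f5 F)) = 0) ↔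
      P5 (p 0) (p 1) = P5 (p 2) (p 3) ∧ IsCrit (p 0, p 1) ∧ IsCrit (p 2, p 3) := by
  have e : eval p (f5 F) = P5 (p 0) (p 1) - P5 (p 2) (p 3) := by
    simp [f5, P5]
  have c5 : (5 : MvPolynomial (Fin 4) F) = C 5 := (map_ofNat C 5).symm
  have e0 : eval p (pderiv 0 (f5 F)) = 5 * dP (p 0) (p 1) := by
    simp [f5, P5, dP, c5, Derivation.leibniz_pow]
    ring
  have e1 : eval p (pderiv 1 (f5 F)) = 5 * dP (p 1) (p 0) := by
    simp [f5, P5, dP, c5, Derivation.leibniz_pow]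
    ring
  have e2 : eval p (pderiv 2 (f5 F)) = -(5 * dP (p 2) (p 3)) := by
    simp [f5, P5, dP, c5, Derivation.leibniz_pow]
    ring
  have e3 : eval p (pderiv 3 (f5 F)) = -(5 * dP (p 3) (p 2)) := by
    simp [f5, P5, dP, c5, Derivation.leibniz_pow]
    ring
  simp only [Fin.forall_fin_succ, IsEmpty.forall_iff, and_true]
  change _ ∧ eval p (pderiv 0 (f5 F)) = 0 ∧ eval p (pderiv 1 (f5 F)) = 0 ∧
    eval p (pderiv 2 (f5 F)) = 0 ∧ eval p (pderiv 3 (f5 F)) = 0 ↔ _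
  rw [e, e0, e1, e2, e3]
  simp [IsCrit, h5, sub_eq_zero, and_assoc]

theorem zeta5_pow {z : F} (hz : z ∈ zeta5 F) : z ^ 5 = 1 := by
  simp only [zeta5, Set.mem_ofPred_eq] at hz
  linear_combination (z - 1) * hz

theorem isCrit_iff (h2 : (2 : F) ≠ 0) (a : F × F) :
    IsCrit a ↔ a ∈ critA F ∨ a ∈ critB F ∪ critC F ∪ critD F ∨ a ∈ critE F := by
  obtain ⟨x, y⟩ := a
  simp only [critA, critB, critC, critD, critE, Set.mem_union, Set.mem_image, Prod.mk.injEq,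
    golden, zeta5, omega3, Set.mem_ofPred_eq, Set.mem_prod, Prod.exists, IsCrit]
  constructor
  · rintro ⟨h1, h1'⟩
    simp only [dP] at h1 h1'
    have hf : (x - y) * ((x + y + 2) * ((x + y) ^ 2 - (x + y) + 1 - 2 * (x * y))) = 0 := by
      linear_combination h1 - h1'
    rcases mul_eq_zero.1 hf with h | h
    · obtain rfl : x = y := sub_eq_zero.1 h
      have : (x ^ 2 - x - 1) * (x ^ 2 - 3 * x + 1) = 0 := by linear_combination h1
      rcases mul_eq_zero.1 this with h | h
      · exact Or.inl ⟨x, by linear_combination h, rfl, rfl⟩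
      · exact Or.inr <| Or.inl <| Or.inl <| Or.inl
          ⟨x - 1, by linear_combination h, by ring, by ring⟩
    rcases mul_eq_zero.1 h with h | h
    · obtain rfl : y = -2 - x := by linear_combination h
      -- With `d = ζ - ζ⁻¹ = x + 1` one has `ζ + ζ⁻¹ = -3 - d ^ 2`, hence the value of `ζ`.
      obtain ⟨d, rfl⟩ : ∃ d, x = d - 1 := ⟨x + 1, by ring⟩
      have hd : d ^ 4 + 5 * d ^ 2 + 5 = 0 := by
        apply mul_left_cancel₀ h2
        linear_combination h1 + h1'
      obtain ⟨z, hz⟩ : ∃ z, 2 * z = d - 3 - d ^ 2 := ⟨(d - 3 - d ^ 2) / 2, by field_simp⟩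
      have hq : z ^ 2 + (3 + d ^ 2) * z + 1 = 0 := by
        apply mul_left_cancel₀ (mul_ne_zero h2 h2)
        grind
      have hzz : z ^ 4 + z ^ 3 + z ^ 2 + z + 1 = 0 := by grind
      have hz4 : z ^ 4 = z - d := by grind
      exact Or.inr <| Or.inl <| Or.inl <| Or.inr ⟨z, hzz, by rw [hz4]; ring, by rw [hz4]; ring⟩
    · have hs : ((x + y) ^ 2 - (x + y) - 1) * ((x + y) ^ 2 + (x + y) - 1) = 0 := by
        apply mul_left_cancel₀ h2
        grind
      rcases mul_eq_zero.1 hs with hline | hline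
      · have hp : x * y = 1 := by
          apply mul_left_cancel₀ h2
          linear_combination hline - h
        exact Or.inr <| Or.inl <| Or.inr ⟨-x, by grind, by ring, by grind⟩
      · have hp : x * y = (x + y) ^ 2 := by
          apply mul_left_cancel₀ h2
          linear_combination -hline - h
        -- Here `r = -s` and `ω = -x / s`, where `s⁻¹ = s + 1`.
        exact Or.inr <| Or.inr ⟨-(x + y), -x * (x + y + 1),
          ⟨by linear_combination hline, by grind⟩, by grind, by grind⟩
  · rintro (⟨r, hr, rfl, rfl⟩ | ((⟨r, hr, rfl, rfl⟩ | ⟨z, hz, rfl, rfl⟩) | ⟨z, hz, rfl, rfl⟩) |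
      ⟨r, w, ⟨hr, hw⟩, rfl, rfl⟩)
    · constructor <;> simp only [dP] <;> grind
    · constructor <;> simp only [dP] <;> grind
    · have := zeta5_pow (F := F) hz
      constructor <;> simp only [dP] <;> grind
    · have := zeta5_pow (F := F) hz
      constructor <;> simp only [dP] <;> grind
    · constructor <;> simp only [dP] <;> grind

theorem P5_critA {a : F × F} (ha : a ∈ critA F) : P5 a.1 a.2 = 6 := by
  obtain ⟨r, hr, rfl⟩ := ha
  simp only [golden, Set.mem_ofPred_eq] at hr
  simp only [P5]
  grind

theorem P5_critBCD {a : F × F} (ha : a ∈ critB F ∪ critC F ∪ critD F) : P5 a.1 a.2 = -2 := by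
  rcases ha with (⟨r, hr, rfl⟩ | ⟨z, hz, rfl⟩) | ⟨z, hz, rfl⟩
  · simp only [golden, Set.mem_ofPred_eq] at hr
    simp only [P5]
    grind
  · have := zeta5_pow hz
    simp only [zeta5, Set.mem_ofPred_eq] at hz
    simp only [P5]
    grind
  · have := zeta5_pow hz
    simp only [zeta5, Set.mem_ofPred_eq] at hz
    simp only [P5]
    grind

theorem P5_critE {a : F × F} (ha : a ∈ critE F) : P5 a.1 a.2 = -3 := by
  obtain ⟨⟨r, w⟩, ⟨hr, hw⟩, rfl⟩ := ha
  simp only [golden, omega3, Set.mem_ofPred_eq] at hr hw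
  simp only [P5]
  grind

/-! ### Counting critical points -/

theorem ncard_critA : (critA F).ncard = (golden F).ncard :=
  Set.ncard_image_of_injective _ fun a b h => by simpa using h

theorem ncard_critB : (critB F).ncard = (golden F).ncard :=
  Set.ncard_image_of_injective _ fun a b h => by simpa using h

theorem ncard_critC (h2 : (2 : F) ≠ 0) : (critC F).ncard = (zeta5 F).ncard := by
  -- `ζ` is recovered from `d = ζ - ζ⁻¹` by `2 ζ = d - 3 - d ^ 2`.
  have key : ∀ z ∈ zeta5 F, 2 * z = (z - z ^ 4) - 3 - (z - z ^ 4) ^ 2 := by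
    intro z hz
    have := zeta5_pow hz
    simp only [zeta5, Set.mem_ofPred_eq] at hz
    grind
  refine Set.InjOn.ncard_image fun a ha b hb h => ?_
  have h1 : a - a ^ 4 = b - b ^ 4 := by
    have := congrArg Prod.fst h
    simp only at this
    linear_combination this
  apply mul_left_cancel₀ h2
  rw [key a ha, key b hb, h1]

theorem ncard_critD : (critD F).ncard = (zeta5 F).ncard :=
  Set.ncard_image_of_injective _ fun a b h => by
    have := congrArg Prod.fst h
    simpa using this

theorem ncard_critE : (critE F).ncard = (golden F).ncard * (omega3 F).ncard := by
  rw [← Set.ncard_prod]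
  refine Set.InjOn.ncard_image ?_
  rintro ⟨r, w⟩ ⟨hr, hw⟩ ⟨r', w'⟩ ⟨hr', hw'⟩ h
  simp only [golden, omega3, Set.mem_ofPred_eq, Prod.mk.injEq] at hr hw hr' hw' h ⊢
  obtain ⟨h1, h3⟩ := h
  -- `ω r + ω² r = -r` recovers `r`.
  have e : r = r' := by linear_combination -h1 - h3 + r * hw - r' * hw'
  subst e
  have : r ≠ 0 := by rintro rfl; simp at hr
  exact ⟨rfl, mul_right_cancel₀ this h1⟩

theorem ncard_critBCD [Finite F] (h2 : (2 : F) ≠ 0) (h5 : (5 : F) ≠ 0) :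
    (critB F ∪ critC F ∪ critD F).ncard = (golden F).ncard + 2 * (zeta5 F).ncard := by
  have d1 : Disjoint (critB F) (critC F) := by
    rw [Set.disjoint_left]
    rintro _ ⟨r, hr, rfl⟩ ⟨z, hz, h⟩
    simp only [golden, Set.mem_ofPred_eq, Prod.mk.injEq] at hr h
    have : r + 2 = 0 := by
      apply mul_left_cancel₀ h2
      linear_combination -h.1 - h.2
    exact h5 (by grind)
  have d2 : Disjoint (critB F ∪ critC F) (critD F) := by
    rw [Set.disjoint_left]
    rintro _ h ⟨z, hz, rfl⟩
    have hz5 := zeta5_pow hz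
    simp only [zeta5, Set.mem_ofPred_eq] at hz
    -- Both the diagonal and the line `x + y = -2` force `ζ = ±1`, hence `ζ = 1`.
    suffices z = 1 by subst this; exact h5 (by linear_combination hz)
    rcases h with ⟨r, hr, h⟩ | ⟨z', hz', h⟩
    · simp only [Prod.mk.injEq] at h
      have : z ^ 4 = z := by linear_combination h.2 - h.1
      grind
    · simp only [Prod.mk.injEq] at h
      have hline : z + z ^ 4 = 2 := by linear_combination h.1 + h.2
      have : (z - 1) ^ 2 = 0 := by linear_combination z * hline - hz5
      exact sub_eq_zero.1 (pow_eq_zero_iff two_ne_zero |>.1 this)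
  rw [Set.ncard_union_eq d2, Set.ncard_union_eq d1, ncard_critB, ncard_critC h2, ncard_critD]
  ring

/-! ### Singular points as pairs of critical points -/

/-- Concatenation of two points of the plane. -/
def glue {F : Type*} (a : (F × F) × (F × F)) : Fin 4 → F := ![a.1.1, a.1.2, a.2.1, a.2.2]

theorem glue_injective {F : Type*} : Function.Injective (glue (F := F)) := by
  rintro ⟨⟨a, b⟩, c, d⟩ ⟨⟨a', b'⟩, c', d'⟩ h
  have h0 := congrFun h 0
  have h1 := congrFun h 1
  have h2 := congrFun h 2
  have h3 := congrFun h 3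
  simp [glue] at h0 h1 h2 h3
  simp [h0, h1, h2, h3]

theorem singular_eq (h2 : (2 : F) ≠ 0) (h3 : (3 : F) ≠ 0) (h5 : (5 : F) ≠ 0) :
    {p : Fin 4 → F | eval p (f5 F) = 0 ∧ ∀ i : Fin 4, eval p (pderiv i (f5 F)) = 0} =
      glue '' (critA F ×ˢ critA F ∪
        (critB F ∪ critC F ∪ critD F) ×ˢ (critB F ∪ critC F ∪ critD F) ∪
        critE F ×ˢ critE F) := by
  have n1 : (6 : F) ≠ -2 := fun h => by
    have : (2 : F) ^ 3 = 0 := by linear_combination h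
    exact pow_ne_zero 3 h2 this
  have n2 : (6 : F) ≠ -3 := fun h => by
    have : (3 : F) ^ 2 = 0 := by linear_combination h
    exact pow_ne_zero 2 h3 this
  have n3 : (-2 : F) ≠ -3 := fun h => one_ne_zero (α := F) (by linear_combination h)
  ext p
  simp only [Set.mem_ofPred_eq, singular_iff h5, isCrit_iff h2]
  constructor
  · rintro ⟨hv, ha, hb⟩
    refine ⟨((p 0, p 1), (p 2, p 3)), ?_, ?_⟩
    · rcases ha with ha | ha | ha <;> rcases hb with hb | hb | hb
      · exact Or.inl (Or.inl ⟨ha, hb⟩)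
      · exact absurd ((P5_critA ha).symm.trans (hv.trans (P5_critBCD hb))) n1
      · exact absurd ((P5_critA ha).symm.trans (hv.trans (P5_critE hb))) n2
      · exact absurd ((P5_critBCD ha).symm.trans (hv.trans (P5_critA hb))) n1.symm
      · exact Or.inl (Or.inr ⟨ha, hb⟩)
      · exact absurd ((P5_critBCD ha).symm.trans (hv.trans (P5_critE hb))) n3
      · exact absurd ((P5_critE ha).symm.trans (hv.trans (P5_critA hb))) n2.symm
      · exact absurd ((P5_critE ha).symm.trans (hv.trans (P5_critBCD hb))) n3.symm
      · exact Or.inr ⟨ha, hb⟩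
    · ext i
      fin_cases i <;> rfl
  · rintro ⟨⟨⟨x, y⟩, ⟨z, w⟩⟩, (⟨ha, hb⟩ | ⟨ha, hb⟩) | ⟨ha, hb⟩, rfl⟩
    · exact ⟨(P5_critA ha).trans (P5_critA hb).symm, Or.inl ha, Or.inl hb⟩
    · exact ⟨(P5_critBCD ha).trans (P5_critBCD hb).symm, Or.inr (Or.inl ha), Or.inr (Or.inl hb)⟩
    · exact ⟨(P5_critE ha).trans (P5_critE hb).symm, Or.inr (Or.inr ha), Or.inr (Or.inr hb)⟩

theorem ncard_singular [Finite F] (h2 : (2 : F) ≠ 0) (h3 : (3 : F) ≠ 0) (h5 : (5 : F) ≠ 0) :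
    {p : Fin 4 → F | eval p (f5 F) = 0 ∧ ∀ i : Fin 4, eval p (pderiv i (f5 F)) = 0}.ncard =
      (golden F).ncard ^ 2 + ((golden F).ncard + 2 * (zeta5 F).ncard) ^ 2 +
        ((golden F).ncard * (omega3 F).ncard) ^ 2 := by
  have n1 : (6 : F) ≠ -2 := fun h => by
    have : (2 : F) ^ 3 = 0 := by linear_combination h
    exact pow_ne_zero 3 h2 this
  have n2 : (6 : F) ≠ -3 := fun h => by
    have : (3 : F) ^ 2 = 0 := by linear_combination h
    exact pow_ne_zero 2 h3 this
  have n3 : (-2 : F) ≠ -3 := fun h => one_ne_zero (α := F) (by linear_combination h)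
  rw [singular_eq h2 h3 h5, Set.ncard_image_of_injective _ glue_injective,
    Set.ncard_union_eq, Set.ncard_union_eq, Set.ncard_prod, Set.ncard_prod, Set.ncard_prod,
    ncard_critA, ncard_critBCD h2 h5, ncard_critE]
  · ring
  · rw [Set.disjoint_left]
    rintro ⟨a, b⟩ ⟨ha, -⟩ ⟨hb, -⟩
    exact n1 ((P5_critA ha).symm.trans (P5_critBCD hb))
  · rw [Set.disjoint_left]
    rintro ⟨a, b⟩ (⟨ha, -⟩ | ⟨ha, -⟩) ⟨hb, -⟩
    · exact n2 ((P5_critA ha).symm.trans (P5_critE hb))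
    · exact n3 ((P5_critBCD ha).symm.trans (P5_critE hb))

end

section
variable {F : Type*} [Field F] [Fintype F]

/-! ### Golden ratios and roots of unity in a finite field -/

instance : Fact (Nat.Prime 5) := ⟨by norm_num⟩

theorem card_primitiveRoots_prime (l : ℕ) [hl : Fact l.Prime] :
    (primitiveRoots l F).card = if Fintype.card F % l = 1 then l - 1 else 0 := by
  classical
  have h1 := Fintype.one_lt_card (α := F)
  split_ifs with h
  · have hd : l ∣ Fintype.card Fˣ := by
      rw [Fintype.card_units]
      exact (Nat.modEq_iff_dvd' h1.le).1 (by
        rw [Nat.ModEq, h, Nat.mod_eq_of_lt hl.out.one_lt])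
    obtain ⟨u, hu⟩ := exists_prime_orderOf_dvd_card l hd
    have hp : IsPrimitiveRoot (u : F) l := by
      rw [IsPrimitiveRoot.coe_units_iff, ← hu]
      exact IsPrimitiveRoot.orderOf u
    rw [hp.card_primitiveRoots, Nat.totient_prime hl.out]
  · rw [Finset.card_eq_zero, Finset.eq_empty_iff_forall_notMem]
    intro z hz
    have hz := (mem_primitiveRoots hl.out.pos).1 hz
    have hd : l ∣ Fintype.card F - 1 :=
      hz.dvd_of_pow_eq_one _ (FiniteField.pow_card_sub_one_eq_one z (hz.ne_zero hl.out.ne_zero))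
    have := (Nat.modEq_iff_dvd' h1.le).2 hd
    rw [Nat.ModEq, Nat.mod_eq_of_lt hl.out.one_lt] at this
    exact h this.symm

theorem ncard_zeta5 (h5 : (5 : F) ≠ 0) :
    (zeta5 F).ncard = if Fintype.card F % 5 = 1 then 4 else 0 := by
  rw [← card_primitiveRoots_prime 5, ← Set.ncard_coe_finset]
  congr 1
  ext z
  simp only [Finset.mem_coe, mem_primitiveRoots (show 0 < 5 by norm_num)]
  constructor
  · intro hz
    rw [← orderOf_eq_prime_iff.2 ⟨zeta5_pow hz, ?_⟩]
    · exact IsPrimitiveRoot.orderOf z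
    · rintro rfl
      simp only [zeta5, Set.mem_ofPred_eq] at hz
      exact h5 (by linear_combination hz)
  · intro hz
    have h0 : (z - 1) * (z ^ 4 + z ^ 3 + z ^ 2 + z + 1) = 0 := by
      linear_combination hz.pow_eq_one
    exact (mul_eq_zero.1 h0).resolve_left (sub_ne_zero.2 (hz.ne_one (by norm_num)))

theorem ncard_omega3 (h3 : (3 : F) ≠ 0) :
    (omega3 F).ncard = if Fintype.card F % 3 = 1 then 2 else 0 := by
  have : Fact (Nat.Prime 3) := ⟨by norm_num⟩
  rw [← card_primitiveRoots_prime 3, ← Set.ncard_coe_finset]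
  congr 1
  ext z
  simp only [Finset.mem_coe, mem_primitiveRoots (show 0 < 3 by norm_num)]
  constructor
  · intro hz
    simp only [omega3, Set.mem_ofPred_eq] at hz
    rw [← orderOf_eq_prime_iff.2 ⟨show z ^ 3 = 1 by linear_combination (z - 1) * hz, ?_⟩]
    · exact IsPrimitiveRoot.orderOf z
    · rintro rfl
      exact h3 (by linear_combination hz)
  · intro hz
    have h0 : (z - 1) * (z ^ 2 + z + 1) = 0 := by
      linear_combination hz.pow_eq_one
    exact (mul_eq_zero.1 h0).resolve_left (sub_ne_zero.2 (hz.ne_one (by norm_num)))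

/-- Quadratic reciprocity for `5`: the sign `χ₄ q` plays no role, as `-1` is a square mod `5`. -/
theorem isSquare_five_iff (h2 : (2 : F) ≠ 0) (hq : Fintype.card F % 2 = 1) :
    IsSquare (5 : F) ↔
      Fintype.card F % 5 = 0 ∨ Fintype.card F % 5 = 1 ∨ Fintype.card F % 5 = 4 := by
  have hF : ringChar F ≠ 2 := fun h => h2 (by
    have := ringChar.Nat.cast_ringChar (R := F)
    rw [h] at this
    exact_mod_cast this)
  have := FiniteField.isSquare_odd_prime_iff hF (p := 5) (by norm_num)
  rw [show ((5 : ℕ) : F) = 5 by norm_num] at this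
  rw [this, ← ZMod.natCast_mod (Fintype.card F) 5]
  have hm : Fintype.card F % 5 < 5 := Nat.mod_lt _ (by norm_num)
  have hχ : ZMod.χ₄ (Fintype.card F : ZMod 4) = 1 ∨ ZMod.χ₄ (Fintype.card F : ZMod 4) = -1 := by
    rw [ZMod.χ₄_nat_eq_if_mod_four]
    split_ifs <;> simp_all
  generalize Fintype.card F % 5 = m at *
  rcases hχ with h | h <;> rw [h] <;> interval_cases m <;> decide

theorem ncard_golden (h2 : (2 : F) ≠ 0) (h5 : (5 : F) ≠ 0) (hq : Fintype.card F % 2 = 1)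
    (hq5 : Fintype.card F % 5 ≠ 0) :
    (golden F).ncard = if Fintype.card F % 5 = 1 ∨ Fintype.card F % 5 = 4 then 2 else 0 := by
  have hs := isSquare_five_iff h2 hq
  split_ifs with h
  · obtain ⟨t, ht⟩ := hs.2 (Or.inr h)
    have ht0 : t ≠ 0 := by rintro rfl; simp [h5] at ht
    rw [Set.ncard_eq_two]
    refine ⟨(1 + t) / 2, (1 - t) / 2, fun h => ?_, ?_⟩
    · field_simp at h
      exact mul_ne_zero h2 ht0 (by linear_combination h)
    · ext r
      simp only [golden, Set.mem_ofPred_eq, Set.mem_insert_iff, Set.mem_singleton_iff]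
      rw [eq_div_iff h2, eq_div_iff h2, ← sub_eq_zero (a := r * 2), ← sub_eq_zero (a := r * 2),
        ← mul_eq_zero]
      constructor
      · intro hr
        linear_combination 4 * hr + ht
      · intro hr
        apply mul_left_cancel₀ (mul_ne_zero h2 h2)
        linear_combination hr - ht
  · rw [Set.ncard_eq_zero, Set.eq_empty_iff_forall_notMem]
    intro r hr
    simp only [golden, Set.mem_ofPred_eq] at hr
    have := hs.1 ⟨2 * r - 1, by linear_combination -4 * hr⟩
    tauto

end

end ChebyshevThreefold

open ChebyshevThreefold in
/-- The number of `𝔽_q`-rational singular points of the Chebyshev threefold `f_5 = 0`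
for `gcd(q,30) = 1`, according to the residue of `q` modulo 15. -/
theorem card_rational_singular_points {F : Type*} [Field F] [Fintype F]
    (h30 : Nat.gcd (Fintype.card F) 30 = 1) :
    {p : Fin 4 → F | eval p (f5 F) = 0 ∧
        ∀ i : Fin 4, eval p (pderiv i (f5 F)) = 0}.ncard =
      if Fintype.card F % 15 = 1 then 120
      else if Fintype.card F % 15 = 11 then 104
      else if Fintype.card F % 15 = 4 then 24
      else if Fintype.card F % 15 = 14 then 8
      else 0 := by
  -- If `l ∣ 30` vanished in `F`, the characteristic would divide both `l` and `q`, which are coprime.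
  have key : ∀ l : ℕ, l ∣ 30 → (l : F) ≠ 0 := by
    intro l hl h0
    have hc : Nat.Coprime (Fintype.card F) l := Nat.Coprime.coprime_dvd_right hl h30
    have d1 := (CharP.cast_eq_zero_iff F (ringChar F) l).1 h0
    have d2 := (CharP.cast_eq_zero_iff F (ringChar F) _).1 (Nat.cast_card_eq_zero F)
    exact CharP.ringChar_ne_one (R := F) (Nat.eq_one_of_dvd_coprimes hc d2 d1)
  have h2 : (2 : F) ≠ 0 := by exact_mod_cast key 2 (by norm_num)
  have h3 : (3 : F) ≠ 0 := by exact_mod_cast key 3 (by norm_num)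
  have h5 : (5 : F) ≠ 0 := by exact_mod_cast key 5 (by norm_num)
  have hmod : ∀ l : ℕ, l ∣ 30 → l ≠ 1 → Fintype.card F % l ≠ 0 := fun l hl h1 h0 =>
    h1 (Nat.dvd_one.1 (h30 ▸ Nat.dvd_gcd (Nat.dvd_of_mod_eq_zero h0) hl))
  have m2 := hmod 2 (by norm_num) (by norm_num)
  have m3 := hmod 3 (by norm_num) (by norm_num)
  have m5 := hmod 5 (by norm_num) (by norm_num)
  rw [ncard_singular h2 h3 h5, ncard_golden h2 h5 (by omega) m5, ncard_zeta5 h5, ncard_omega3 h3]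
  generalize Fintype.card F = q at *
  have e3 : q % 3 = q % 15 % 3 := by omega
  have e5 : q % 5 = q % 15 % 5 := by omega
  rw [e3] at m3 ⊢
  rw [e5] at m5 ⊢
  have : q % 15 < 15 := Nat.mod_lt _ (by norm_num)
  generalize q % 15 = m at *
  interval_cases m <;> simp at m3 m5 ⊢
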